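/- There is a constant C = C(d) > 0, depending only on the dimension d, with the following property: for every u₀ ∈ L²(ℝ^d), every T > 0 and every N > 0, there exists R ∈ L²(ℝ^d) with ‖R‖ ≤ C (1 + (TN²)^{-d/4}) e^{-TN²} ‖u₀‖ such that the family (u(T, n/N)·f_{N,n})_{n∈ℤ^d} is summable in L²(ℝ^d) and u(T,·) = Σ_{n∈ℤ^d} u(T, n/N) f_{N,n} + R in L²(ℝ^d), where u is the heat solution with initial datum u₀. -/

import Mathlib

open MeasureTheory Filter Topology Metric ENNReal NNReal

noncomputable section

/-- `sinc` with value 1 at 0. -/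
def sinc' (x : ℝ) : ℝ := if x = 0 then 1 else Real.sin x / x

/-- The function `f_{N,n}(x) = ∏_j sin (π (N x_j - n_j)) / (π (N x_j - n_j))`. -/
def fN (d : ℕ) (N : ℝ) (n : Fin d → ℤ) (x : EuclideanSpace ℝ (Fin d)) : ℝ :=
  ∏ j, sinc' (Real.pi * (N * x j - n j))

/-- The lattice point `n / N` in `ℝ^d`. -/
def latticePt (d : ℕ) (N : ℝ) (n : Fin d → ℤ) : EuclideanSpace ℝ (Fin d) :=
  WithLp.toLp 2 fun j => (n j : ℝ) / N

/-- The heat solution at time `t > 0` with initial datum `u₀ ∈ L²(ℝ^d)`: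
`u(t,x) = (4πt)^{-d/2} ∫ e^{-|x-y|²/(4t)} u₀(y) dy`. -/
def heatSol (d : ℕ) (u₀ : EuclideanSpace ℝ (Fin d) → ℝ) (t : ℝ)
    (x : EuclideanSpace ℝ (Fin d)) : ℝ :=
  (4 * Real.pi * t) ^ (-(d : ℝ) / 2) * ∫ y, Real.exp (-‖x - y‖ ^ 2 / (4 * t)) * u₀ y

/-- The family `F` is summable in `L²(ℝ^d)` with sum `g`: the finite partial sums
converge to `g` in the `L²` norm along the filter of finite subsets of `ℤ^d`. -/
def HasSumL2 (d : ℕ) {V : Type} [NormedAddCommGroup V]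
    (F : (Fin d → ℤ) → EuclideanSpace ℝ (Fin d) → V)
    (g : EuclideanSpace ℝ (Fin d) → V) : Prop :=
  Tendsto (fun s : Finset (Fin d → ℤ) =>
    eLpNorm (fun x => g x - ∑ n ∈ s, F n x) 2 volume) atTop (𝓝 0)

/-- The closed cube `Q_r(0)` in `ℝ^d`, centered at the origin, of side length `2r`. -/
def Qcube (d : ℕ) (r : ℝ) : Set (EuclideanSpace ℝ (Fin d)) := {ξ | ∀ j, |ξ j| ≤ r}

/-- The truncated Fourier integral, with the paper's normalization
`(2π)^{-d/2} ∫_{|x| ≤ R} e^{-i x·ξ} f(x) dx`. -/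
def truncFT (d : ℕ) (f : EuclideanSpace ℝ (Fin d) → ℂ) (R : ℝ)
    (ξ : EuclideanSpace ℝ (Fin d)) : ℂ :=
  (((2 * Real.pi) ^ (-(d : ℝ) / 2) : ℝ) : ℂ) *
    ∫ x in closedBall (0 : EuclideanSpace ℝ (Fin d)) R,
      Complex.exp (-(Complex.I * ((inner ℝ x ξ : ℝ) : ℂ))) * f x

/-- `fhat` is the Fourier transform of `f ∈ L²(ℝ^d)` in the `L²` (Plancherel) sense:
`fhat ∈ L²` and the Fourier integrals of the truncations of `f` converge to `fhat`
in the `L²` norm. -/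
def IsL2Fourier (d : ℕ) (f fhat : EuclideanSpace ℝ (Fin d) → ℂ) : Prop :=
  MemLp fhat 2 volume ∧
    Tendsto (fun R : ℝ => eLpNorm (fun ξ => fhat ξ - truncFT d f R ξ) 2 volume)
      atTop (𝓝 0)

/-- The `L²(ℝ^d)` norm of a function, as a real number. -/
def l2norm (d : ℕ) {V : Type} [NormedAddCommGroup V]
    (f : EuclideanSpace ℝ (Fin d) → V) : ℝ :=
  (eLpNorm f 2 volume).toReal

/-!
By a dilation it suffices to take `N = 1`. Write `u(T, ·) = 𝓕 g`, where
`g ξ = e^{-4π²T|ξ|²} v ξ` and `𝓕 v = u₀`. Let `H` be the `ℤ^d`-periodisation of `g`, cut off to the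
unit cube `Q₀` centred at the origin. By Poisson summation the Fourier coefficients of the
periodisation are the samples `u(T, n)`, so applying `𝓕` to its Fourier series on `Q₀` turns the
characters into shifted cardinal sines and gives `𝓕 H = ∑ n, u(T, n) f_{1,n}` in `L²`.

The remainder `𝓕 (g - H)` only sees frequencies outside `Q₀`, and is bounded by
`‖g‖_{L²(Q₀ᶜ)} + ∑_{k ≠ 0} ‖g‖_{L²(Q_k)}`, where `Q_k = k + Q₀`. On `Q_k` one has `|ξ| ≥ |k|/2`, and
`π² T |k|² ≥ T + T|k|²/2` since `π² > 9` and `|k| ≥ 1`. This gives the factor `e^{-T}`, and the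
Cauchy–Schwarz inequality leaves the theta sum `(∑_k e^{-T|k|²})^{1/2}`, of size `1 + T^{-d/4}`.
-/

section FourierTransform

open FourierTransform

variable {V : Type*} [NormedAddCommGroup V] [InnerProductSpace ℝ V] [FiniteDimensional ℝ V]
  [MeasurableSpace V] [BorelSpace V]
  {F : Type*} [NormedAddCommGroup F] [InnerProductSpace ℂ F] [CompleteSpace F]

omit [CompleteSpace F] in
lemma continuous_fourier_of_integrable {f : V → F} (hf : Integrable f) : Continuous (𝓕 f) :=
  VectorFourier.fourierIntegral_continuous (L := innerₗ V) Real.continuous_fourierChar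
    (by simp only [innerₗ_apply_apply]; fun_prop) hf

lemma integral_fourier_smul_eq_of_integrable {f : V → ℂ} {g : V → F} (hf : Integrable f)
    (hg : Integrable g) : ∫ x, 𝓕 f x • g x = ∫ x, f x • 𝓕 g x := by
  have h := VectorFourier.integral_fourierIntegral_smul_eq_flip (L := innerₗ V)
    Real.continuous_fourierChar (by simp only [innerₗ_apply_apply]; fun_prop) hf hg
  rwa [flip_innerₗ] at h

lemma integral_smul_fourier_toLp {f : V → F} (hf : Integrable f) (hf2 : MemLp f 2)
    (φ : SchwartzMap V ℂ) :
    ∫ x, φ x • (𝓕 hf2.toLp : Lp F 2 volume) x = ∫ x, φ x • 𝓕 f x := by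
  rw [← Lp.toTemperedDistribution_apply, ← Lp.fourier_toTemperedDistribution_eq,
    TemperedDistribution.fourier_apply, Lp.toTemperedDistribution_apply,
    ← integral_fourier_smul_eq_of_integrable φ.integrable hf, ← SchwartzMap.fourier_coe]
  refine integral_congr_ae ?_
  filter_upwards [hf2.coeFn_toLp] with x hx
  rw [hx]

theorem coeFn_fourier_toLp {f : V → F} (hf : Integrable f) (hf2 : MemLp f 2) :
    (𝓕 hf2.toLp : Lp F 2 volume) =ᵐ[volume] 𝓕 f := by
  refine ae_eq_of_integral_contDiff_smul_eq ((Lp.memLp _).locallyIntegrable one_le_two)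
    (continuous_fourier_of_integrable hf).locallyIntegrable fun g hg hg_supp ↦ ?_
  have hφ_supp : HasCompactSupport (Complex.ofReal ∘ g) := hg_supp.comp_left Complex.ofReal_zero
  exact integral_smul_fourier_toLp hf hf2
    (hφ_supp.toSchwartzMap (Complex.ofRealCLM.contDiff.comp hg))

end FourierTransform

section HeatSymbol

open FourierTransform RealInnerProductSpace

variable {V : Type*} [NormedAddCommGroup V] [InnerProductSpace ℝ V]

/-- The Fourier multiplier `e^{-4π²T|ξ|²}` of the heat semigroup at time `T`, for the
normalisation `∫ e^{-2πi⟨x,ξ⟩} f(x) dx` of the Fourier transform. -/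
def heatSymbol (T : ℝ) (ξ : V) : ℝ := Real.exp (-(4 * Real.pi ^ 2 * T * ‖ξ‖ ^ 2))

/-- The heat semigroup at time `T`, acting on the Fourier side. -/
def heatMul (T : ℝ) (v : V → ℂ) (ξ : V) : ℂ := heatSymbol T ξ * v ξ

/-- The plane wave `e^{2πi⟨x,ξ⟩}` damped by the heat symbol, whose Fourier transform is the heat
kernel centred at `x`. -/
def heatWave (T : ℝ) (x ξ : V) : ℂ := Real.fourierChar ⟪x, ξ⟫ • (heatSymbol T ξ : ℂ)

lemma norm_heatWave (T : ℝ) (x ξ : V) : ‖heatWave T x ξ‖ = heatSymbol T ξ := by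
  rw [heatWave, Circle.norm_smul, Complex.norm_real, heatSymbol,
    Real.norm_of_nonneg (Real.exp_pos _).le]

omit [InnerProductSpace ℝ V] in
lemma heatSymbol_sq (T : ℝ) (ξ : V) : heatSymbol T ξ ^ 2 = heatSymbol (2 * T) ξ := by
  rw [heatSymbol, heatSymbol, ← Real.exp_nat_mul]
  ring_nf

lemma heatWave_eq_cexp (T : ℝ) (x ξ : V) :
    heatWave T x ξ = Complex.exp (-(4 * Real.pi ^ 2 * T : ℝ) * (‖ξ‖ : ℂ) ^ 2
      + 2 * Real.pi * Complex.I * ⟪x, ξ⟫) := by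
  rw [heatWave, heatSymbol, Circle.smul_def, Real.fourierChar_apply, smul_eq_mul,
    Complex.ofReal_exp, ← Complex.exp_add]
  push_cast
  ring_nf

variable [FiniteDimensional ℝ V] [MeasurableSpace V] [BorelSpace V] {T : ℝ}

lemma integrable_heatWave (hT : 0 < T) (x : V) : Integrable (heatWave T x) := by
  have hb : 0 < ((4 * Real.pi ^ 2 * T : ℝ) : ℂ).re := by
    rw [Complex.ofReal_re]
    positivity
  rw [funext (heatWave_eq_cexp T x)]
  exact GaussianFourier.integrable_cexp_neg_mul_sq_norm_add hb (2 * Real.pi * Complex.I) x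

lemma memLp_two_heatWave (hT : 0 < T) (x : V) : MemLp (heatWave T x) 2 := by
  rw [memLp_two_iff_integrable_sq_norm (integrable_heatWave hT x).aestronglyMeasurable]
  simpa only [norm_heatWave, heatSymbol_sq] using (integrable_heatWave (mul_pos two_pos hT) x).norm

lemma fourier_heatWave (hT : 0 < T) (x y : V) :
    𝓕 (heatWave T x) y = (((4 * Real.pi * T) ^ (-(Module.finrank ℝ V : ℝ) / 2) *
      Real.exp (-‖x - y‖ ^ 2 / (4 * T)) : ℝ) : ℂ) := by
  have hb : 0 < ((4 * Real.pi ^ 2 * T : ℝ) : ℂ).re := by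
    rw [Complex.ofReal_re]
    positivity
  have hbase : (Real.pi : ℂ) / ((4 * Real.pi ^ 2 * T : ℝ) : ℂ) = ((4 * Real.pi * T)⁻¹ : ℝ) := by
    rw [← Complex.ofReal_div]
    congr 1
    field_simp
  have hrank : (Module.finrank ℝ V : ℂ) / 2 = ((Module.finrank ℝ V / 2 : ℝ) : ℂ) := by
    push_cast
    rfl
  rw [funext (heatWave_eq_cexp T x), fourier_gaussian_innerProductSpace' hb, hbase, hrank,
    ← Complex.ofReal_cpow (by positivity), Complex.ofReal_mul,
    Complex.ofReal_mul ((_ : ℝ) ^ (_ : ℝ)), Complex.ofReal_exp,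
    Real.inv_rpow (by positivity), ← Real.rpow_neg (by positivity), neg_div]
  congr 2
  have : (Real.pi : ℂ) ≠ 0 := by exact_mod_cast Real.pi_ne_zero
  have : (T : ℂ) ≠ 0 := by exact_mod_cast hT.ne'
  push_cast
  field_simp

lemma integral_conj_heatWave_mul (T : ℝ) (x : V) (v : V → ℂ) :
    ∫ ξ, starRingEnd ℂ (heatWave T x ξ) * v ξ = 𝓕 (heatMul T v) x := by
  rw [Real.fourier_eq]
  congr with ξ
  rw [heatWave, heatMul, Circle.smul_def, Circle.smul_def, smul_eq_mul, smul_eq_mul, map_mul,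
    Complex.conj_ofReal, ← Circle.coe_inv_eq_conj, ← AddChar.map_neg_eq_inv, real_inner_comm,
    mul_assoc]

omit [InnerProductSpace ℝ V] [FiniteDimensional ℝ V] [MeasurableSpace V] [BorelSpace V] in
lemma norm_heatMul_le_of_norm_le {r : ℝ} (hT : 0 ≤ T) (v : V → ℂ) {ξ : V} (hr : 0 ≤ r)
    (hξ : r ≤ ‖ξ‖) :
    ‖heatMul T v ξ‖ ≤ Real.exp (-(4 * Real.pi ^ 2 * T * r ^ 2)) * ‖v ξ‖ := by
  rw [heatMul, norm_mul, Complex.norm_real, heatSymbol, Real.norm_of_nonneg (Real.exp_pos _).le]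
  gcongr

lemma integrable_heatMul (hT : 0 < T) {v : V → ℂ} (hv : MemLp v 2) : Integrable (heatMul T v) := by
  refine (((memLp_two_heatWave hT 0).integrable_mul hv).congr (Eventually.of_forall fun ξ ↦ ?_))
  simp [heatWave, heatMul]

lemma memLp_heatMul (hT : 0 < T) {v : V → ℂ} (hv : MemLp v 2) : MemLp (heatMul T v) 2 :=
  hv.of_le (integrable_heatMul hT hv).aestronglyMeasurable <| Eventually.of_forall fun ξ ↦ by
    simpa using norm_heatMul_le_of_norm_le hT.le v le_rfl (norm_nonneg ξ)

theorem heatSol_eq_fourier {d : ℕ} {u₀ : EuclideanSpace ℝ (Fin d) → ℝ}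
    {v : Lp ℂ 2 (volume : Measure (EuclideanSpace ℝ (Fin d)))}
    (hv : (𝓕 v : Lp ℂ 2 (volume : Measure (EuclideanSpace ℝ (Fin d)))) =ᵐ[volume]
      fun y ↦ (u₀ y : ℂ))
    (hT : 0 < T) (x : EuclideanSpace ℝ (Fin d)) :
    (heatSol d u₀ T x : ℂ) = 𝓕 (heatMul T v) x := by
  have hwave := memLp_two_heatWave hT x
  have parseval := Lp.inner_fourier_eq hwave.toLp v
  rw [L2.inner_def, L2.inner_def] at parseval
  calc (heatSol d u₀ T x : ℂ)
    _ = ∫ y, inner ℂ ((𝓕 hwave.toLp : Lp ℂ 2 volume) y) ((𝓕 v : Lp ℂ 2 volume) y) := by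
      rw [heatSol, ← integral_const_mul, ← integral_complex_ofReal]
      refine integral_congr_ae ?_
      filter_upwards [coeFn_fourier_toLp (integrable_heatWave hT x) hwave, hv]
        with y hkernel hdatum
      rw [hkernel, hdatum, fourier_heatWave hT, RCLike.inner_apply, Complex.conj_ofReal,
        finrank_euclideanSpace_fin]
      push_cast
      ring
    _ = ∫ ξ, inner ℂ (hwave.toLp _ ξ) (v ξ) := parseval
    _ = ∫ ξ, starRingEnd ℂ (heatWave T x ξ) * v ξ := by
      refine integral_congr_ae ?_
      filter_upwards [hwave.coeFn_toLp] with ξ hξ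
      rw [hξ, RCLike.inner_apply, mul_comm]
    _ = 𝓕 (heatMul T v) x := integral_conj_heatWave_mul T x _

end HeatSymbol

section Torus

open UnitAddTorus

/-- Mathlib develops Fourier series on `UnitAddTorus` with respect to the normalised Haar measure,
which is only a local instance there. -/
local instance haarMeasureSpaceUnitAddCircle : MeasureSpace UnitAddCircle :=
  ⟨AddCircle.haarAddCircle⟩

local instance isAddHaarMeasure_unitAddCircle :
    Measure.IsAddHaarMeasure (volume : Measure UnitAddCircle) :=
  inferInstanceAs (Measure.IsAddHaarMeasure AddCircle.haarAddCircle)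

local instance isProbabilityMeasure_unitAddCircle :
    IsProbabilityMeasure (volume : Measure UnitAddCircle) :=
  inferInstanceAs (IsProbabilityMeasure AddCircle.haarAddCircle)

variable {ι : Type*}

/-- The point of `ℤ^ι`, seen in Euclidean space. -/
def intPoint (k : ι → ℤ) : EuclideanSpace ℝ ι := WithLp.toLp 2 fun i ↦ (k i : ℝ)

/-- The unit cube centred at the integer point `k`. It is half-open, of the form
`∏ (k i - 1/2, k i + 1/2]`, so that these cubes partition space. -/
def unitCube (k : ι → ℤ) : Set (EuclideanSpace ℝ ι) :=
  {ξ | ∀ i, ξ i ∈ Set.Ioc (k i - 1 / 2 : ℝ) (k i - 1 / 2 + 1)}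

/-- The quotient map from Euclidean space to the torus. -/
def toTorus (ξ : EuclideanSpace ℝ ι) : UnitAddTorus ι := fun i ↦ (ξ i : UnitAddCircle)

/-- The section of `toTorus` with values in the unit cube centred at `k`. -/
def cubeRep (k : ι → ℤ) (t : UnitAddTorus ι) : EuclideanSpace ℝ ι :=
  WithLp.toLp 2 (measurableEquivPiIoc (fun i ↦ (k i - 1 / 2 : ℝ)) t : ι → ℝ)

lemma toTorus_cubeRep (k : ι → ℤ) (t : UnitAddTorus ι) : toTorus (cubeRep k t) = t :=
  (measurableEquivPiIoc fun i ↦ (k i - 1 / 2 : ℝ)).symm_apply_apply t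

lemma cubeRep_toTorus {k : ι → ℤ} {ξ : EuclideanSpace ℝ ι} (hξ : ξ ∈ unitCube k) :
    cubeRep k (toTorus ξ) = ξ :=
  congrArg (fun x : {x : ι → ℝ // ∀ i, x i ∈ Set.Ioc (k i - 1 / 2 : ℝ) (k i - 1 / 2 + 1)} ↦
    WithLp.toLp 2 (x : ι → ℝ))
    ((measurableEquivPiIoc fun i ↦ (k i - 1 / 2 : ℝ)).apply_symm_apply ⟨WithLp.ofLp ξ, hξ⟩)

lemma pairwise_disjoint_unitCube : Pairwise (Function.onFun Disjoint (unitCube (ι := ι))) := by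
  refine fun k l hkl ↦ Set.disjoint_left.2 fun ξ hk hl ↦ hkl (funext fun i ↦ ?_)
  obtain ⟨hk₁, hk₂⟩ := hk i
  obtain ⟨hl₁, hl₂⟩ := hl i
  have hkl : k i < l i + 1 := by exact_mod_cast (by linarith : (k i : ℝ) < l i + 1)
  have hlk : l i < k i + 1 := by exact_mod_cast (by linarith : (l i : ℝ) < k i + 1)
  lia

lemma iUnion_unitCube : ⋃ k, unitCube (ι := ι) k = Set.univ := by
  refine Set.eq_univ_of_forall fun ξ ↦ Set.mem_iUnion.2 ⟨fun i ↦ ⌈ξ i - 1 / 2⌉, fun i ↦ ?_⟩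
  have h_le := Int.le_ceil (ξ i - 1 / 2)
  have h_lt := Int.ceil_lt_add_one (ξ i - 1 / 2)
  constructor <;> linarith

lemma measurable_toTorus : Measurable (toTorus (ι := ι)) :=
  measurable_pi_lambda _ fun _ ↦ AddCircle.measurable_mk'.comp (by fun_prop)

lemma measurableSet_unitCube [Countable ι] (k : ι → ℤ) : MeasurableSet (unitCube k) := by
  simp only [unitCube, Set.ofPred_forall]
  exact MeasurableSet.iInter fun i ↦ measurableSet_Ioc.preimage (by fun_prop)

variable [Fintype ι]

lemma measurePreserving_cubeRep (k : ι → ℤ) :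
    MeasurePreserving (cubeRep k) volume (volume.restrict (unitCube k)) := by
  have h_rep := measurePreserving_equivPiIoc (fun i ↦ (k i - 1 / 2 : ℝ))
  have h_val : MeasurePreserving
      (Subtype.val : {x : ι → ℝ // ∀ i, x i ∈ Set.Ioc (k i - 1 / 2 : ℝ) (k i - 1 / 2 + 1)} → _)
      (volume.comap Subtype.val) (volume.restrict (WithLp.toLp 2 ⁻¹' unitCube k)) :=
    measurePreserving_subtype_coe
      ((PiLp.volume_preserving_toLp ι).measurable (measurableSet_unitCube k))
  have h_toLp := (PiLp.volume_preserving_toLp ι).restrict_preimage (measurableSet_unitCube k)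
  exact h_toLp.comp (h_val.comp h_rep)

lemma measurePreserving_toTorus (k : ι → ℤ) :
    MeasurePreserving toTorus (volume.restrict (unitCube k)) volume := by
  refine ⟨measurable_toTorus, ?_⟩
  rw [← (measurePreserving_cubeRep k).map_eq,
    Measure.map_map measurable_toTorus (measurePreserving_cubeRep k).measurable]
  simp only [Function.comp_def, toTorus_cubeRep, Measure.map_id']

lemma mFourier_toTorus (n : ι → ℤ) (ξ : EuclideanSpace ℝ ι) :
    mFourier n (toTorus ξ) = Real.fourierChar (inner ℝ ξ (intPoint n)) := by
  simp only [mFourier, ContinuousMap.coe_mk, toTorus, fourier_coe_apply, ← Complex.exp_sum,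
    Real.fourierChar_apply, intPoint, PiLp.inner_apply, Finset.mul_sum, Complex.ofReal_sum,
    Finset.sum_mul]
  congr with i
  simp only [Real.inner_apply]
  push_cast
  ring

end Torus

section Periodization

open FourierTransform UnitAddTorus

attribute [local instance] haarMeasureSpaceUnitAddCircle isAddHaarMeasure_unitAddCircle
  isProbabilityMeasure_unitAddCircle

variable {ι : Type*} [Fintype ι]

lemma memLp_indicator_comp_toTorus {p : UnitAddTorus ι → ℂ} {q : ℝ≥0∞} (hp : MemLp p q) :
    MemLp ((unitCube 0).indicator (p ∘ toTorus)) q :=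
  (memLp_indicator_iff_restrict (measurableSet_unitCube 0)).2
    (hp.comp_measurePreserving (measurePreserving_toTorus 0))

lemma indicator_comp_toTorus_congr_ae {p q : UnitAddTorus ι → ℂ} (h : p =ᵐ[volume] q) :
    (unitCube 0).indicator (p ∘ toTorus) =ᵐ[volume] (unitCube 0).indicator (q ∘ toTorus) :=
  (ae_eq_restrict_iff_indicator_ae_eq (measurableSet_unitCube 0)).1
    ((measurePreserving_toTorus 0).quasiMeasurePreserving.ae_eq_comp h)

lemma eLpNorm_indicator_comp_toTorus {p : UnitAddTorus ι → ℂ}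
    (hp : AEStronglyMeasurable p volume) (q : ℝ≥0∞) :
    eLpNorm ((unitCube 0).indicator (p ∘ toTorus)) q = eLpNorm p q := by
  rw [eLpNorm_indicator_eq_eLpNorm_restrict (measurableSet_unitCube 0)]
  exact eLpNorm_comp_measurePreserving hp (measurePreserving_toTorus 0)

/-- The isometric embedding of `L²` of the torus into `L²` of Euclidean space whose range consists
of the functions vanishing outside the unit cube centred at the origin. -/
def cubeExtension : Lp ℂ 2 (volume : Measure (UnitAddTorus ι)) →ₗᵢ[ℂ]
    Lp ℂ 2 (volume : Measure (EuclideanSpace ℝ ι)) where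
  toFun p := (memLp_indicator_comp_toTorus (Lp.memLp p)).toLp
  map_add' p q := by
    rw [← MemLp.toLp_add, MemLp.toLp_eq_toLp_iff, ← Set.indicator_add']
    exact indicator_comp_toTorus_congr_ae (Lp.coeFn_add p q)
  map_smul' c p := by
    rw [RingHom.id_apply, ← MemLp.toLp_const_smul, MemLp.toLp_eq_toLp_iff]
    exact (indicator_comp_toTorus_congr_ae (Lp.coeFn_smul c p)).trans
      (Eventually.of_forall (Set.indicator_const_smul_apply _ c _))
  norm_map' p := by
    simp only [LinearMap.coe_mk, AddHom.coe_mk]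
    rw [Lp.norm_toLp, eLpNorm_indicator_comp_toTorus (Lp.aestronglyMeasurable p), Lp.norm_def]

lemma coeFn_cubeExtension (p : Lp ℂ 2 (volume : Measure (UnitAddTorus ι))) :
    cubeExtension p =ᵐ[volume] (unitCube 0).indicator (p ∘ toTorus) :=
  (memLp_indicator_comp_toTorus (Lp.memLp p)).coeFn_toLp

variable {g : EuclideanSpace ℝ ι → ℂ}

lemma memLp_comp_cubeRep (hg : MemLp g 2) (k : ι → ℤ) : MemLp (g ∘ cubeRep k) 2 :=
  (hg.restrict _).comp_measurePreserving (measurePreserving_cubeRep k)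

/-- The restriction of `g` to the unit cube centred at `k`, seen as a function on the torus. -/
def torusPiece (hg : MemLp g 2) (k : ι → ℤ) : Lp ℂ 2 (volume : Measure (UnitAddTorus ι)) :=
  (memLp_comp_cubeRep hg k).toLp

/-- The `ℤ^ι`-periodisation of `g`. The series converges in `L²` of the torus when the norms of
the pieces `torusPiece hg k` are summable; the value is `0` when it diverges. -/
def periodization (hg : MemLp g 2) : Lp ℂ 2 (volume : Measure (UnitAddTorus ι)) :=
  ∑' k, torusPiece hg k

lemma norm_torusPiece (hg : MemLp g 2) (k : ι → ℤ) :
    ‖torusPiece hg k‖ = (eLpNorm g 2 (volume.restrict (unitCube k))).toReal := by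
  rw [torusPiece, Lp.norm_toLp,
    eLpNorm_comp_measurePreserving hg.1.restrict (measurePreserving_cubeRep k)]

lemma mFourierCoeff_torusPiece (hg : MemLp g 2) (k n : ι → ℤ) :
    mFourierCoeff (torusPiece hg k) n =
      ∫ ξ in unitCube k, Real.fourierChar (-inner ℝ ξ (intPoint n)) • g ξ := by
  have hchar (ξ : EuclideanSpace ℝ ι) :
      Real.fourierChar (-inner ℝ ξ (intPoint n)) • g ξ = mFourier (-n) (toTorus ξ) • g ξ := by
    rw [mFourier_neg, mFourier_toTorus, AddChar.map_neg_eq_inv, Circle.smul_def,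
      Circle.coe_inv_eq_conj]
  calc mFourierCoeff (torusPiece hg k) n
    _ = ∫ t, mFourier (-n) t • g (cubeRep k t) := by
      refine integral_congr_ae ?_
      filter_upwards [(memLp_comp_cubeRep hg k).coeFn_toLp] with t ht
      rw [torusPiece, ht, Function.comp_apply]
    _ = ∫ ξ in unitCube k, mFourier (-n) (toTorus ξ) • g ξ := by
      rw [← (measurePreserving_cubeRep k).map_eq,
        integral_map (measurePreserving_cubeRep k).measurable.aemeasurable]
      · simp only [toTorus_cubeRep]
      · rw [(measurePreserving_cubeRep k).map_eq]
        exact ((mFourier (-n)).continuous.measurable.comp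
          measurable_toTorus).aestronglyMeasurable.smul hg.aestronglyMeasurable.restrict
    _ = _ := by simp only [hchar]

lemma hasSum_mFourierCoeff_torusPiece (hg : MemLp g 2) (hg1 : Integrable g) (n : ι → ℤ) :
    HasSum (fun k ↦ mFourierCoeff (torusPiece hg k) n) (𝓕 g (intPoint n)) := by
  simp only [mFourierCoeff_torusPiece, Real.fourier_eq]
  rw [← setIntegral_univ, ← iUnion_unitCube]
  exact hasSum_integral_iUnion measurableSet_unitCube pairwise_disjoint_unitCube
    ((Real.fourierIntegral_convergent_iff _).2 hg1).integrableOn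

theorem mFourierCoeff_periodization (hg : MemLp g 2) (hg1 : Integrable g)
    (hs : Summable (torusPiece hg)) (n : ι → ℤ) :
    mFourierCoeff (periodization hg) n = 𝓕 g (intPoint n) := by
  have h := hs.hasSum.mapL (innerSL ℂ (mFourierBasis n))
  simp only [innerSL_apply_apply, ← HilbertBasis.repr_apply_apply, mFourierBasis_repr] at h
  exact h.unique (hasSum_mFourierCoeff_torusPiece hg hg1 n)

theorem hasSum_fourier_smul_cubeExtension (hg : MemLp g 2) (hg1 : Integrable g)
    (hs : Summable (torusPiece hg)) :
    HasSum (fun n ↦ 𝓕 g (intPoint n) • cubeExtension (mFourierLp 2 n))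
      (cubeExtension (periodization hg)) := by
  simpa [mFourierCoeff_periodization hg hg1 hs] using
    (hasSum_mFourier_series_L2 (periodization hg)).mapL cubeExtension.toContinuousLinearMap

lemma coeFn_cubeExtension_torusPiece_zero (hg : MemLp g 2) :
    cubeExtension (torusPiece hg 0) =ᵐ[volume] (unitCube 0).indicator g := by
  refine (coeFn_cubeExtension _).trans
    ((indicator_comp_toTorus_congr_ae (memLp_comp_cubeRep hg 0).coeFn_toLp).trans ?_)
  refine Eventually.of_forall fun ξ ↦ congrFun (Set.indicator_congr fun η hη ↦ ?_) ξ
  simp only [Function.comp_apply, cubeRep_toTorus hη]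

lemma norm_toLp_sub_cubeExtension_torusPiece_zero (hg : MemLp g 2 volume) :
    ‖hg.toLp g - cubeExtension (torusPiece hg 0)‖ =
      (eLpNorm g 2 (volume.restrict (unitCube 0)ᶜ)).toReal := by
  rw [Lp.norm_def, ← eLpNorm_indicator_eq_eLpNorm_restrict (measurableSet_unitCube 0).compl]
  congr 1
  refine eLpNorm_congr_ae ?_
  filter_upwards [Lp.coeFn_sub (hg.toLp g) (cubeExtension (torusPiece hg 0)), hg.coeFn_toLp,
    coeFn_cubeExtension_torusPiece_zero hg] with ξ h_sub h_toLp h_ext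
  rw [h_sub, Pi.sub_apply, h_toLp, h_ext, Set.indicator_compl, Pi.sub_apply]

theorem norm_toLp_sub_cubeExtension_periodization_le (hg : MemLp g 2 volume)
    (hs : Summable fun k ↦ (eLpNorm g 2 (volume.restrict (unitCube k))).toReal) :
    ‖hg.toLp g - cubeExtension (periodization hg)‖ ≤
      (eLpNorm g 2 (volume.restrict (unitCube 0)ᶜ)).toReal +
        ∑' k : {k : ι → ℤ // k ≠ 0}, (eLpNorm g 2 (volume.restrict (unitCube k.1))).toReal := by
  simp only [← norm_torusPiece hg] at hs ⊢
  set tail := ∑' k : {k : ι → ℤ // k ≠ 0}, torusPiece hg k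
  have h_split : periodization hg = torusPiece hg 0 + tail := by
    rw [periodization, ← hs.of_norm.tsum_subtype_add_tsum_subtype_compl {0}, tsum_singleton]
    rfl
  calc ‖hg.toLp g - cubeExtension (periodization hg)‖
    _ = ‖hg.toLp g - cubeExtension (torusPiece hg 0) - cubeExtension tail‖ := by
      rw [h_split, map_add, sub_add_eq_sub_sub]
    _ ≤ ‖hg.toLp g - cubeExtension (torusPiece hg 0)‖ + ‖tail‖ :=
      (norm_sub_le _ _).trans_eq (by rw [cubeExtension.norm_map])
    _ ≤ _ := by
      rw [norm_toLp_sub_cubeExtension_torusPiece_zero]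
      gcongr
      exact norm_tsum_le_tsum_norm (hs.subtype _)

end Periodization

section Sinc

open FourierTransform UnitAddTorus

attribute [local instance] haarMeasureSpaceUnitAddCircle isAddHaarMeasure_unitAddCircle
  isProbabilityMeasure_unitAddCircle

lemma fN_eq_prod_sinc (d : ℕ) (N : ℝ) (n : Fin d → ℤ) (x : EuclideanSpace ℝ (Fin d)) :
    fN d N n x = ∏ j, Real.sinc (Real.pi * (N * x j - n j)) := rfl

lemma integral_fourierChar_eq_sinc (y : ℝ) :
    ∫ s in (-(1 / 2))..(1 / 2), (Real.fourierChar (s * y) : ℂ) = Real.sinc (Real.pi * y) := by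
  rcases eq_or_ne y 0 with rfl | hy
  · norm_num
  have hc : (2 * Real.pi * y : ℂ) ≠ 0 := by
    exact_mod_cast mul_ne_zero Real.two_pi_pos.ne' hy
  have h_char (s : ℝ) : (Real.fourierChar (s * y) : ℂ) =
      Complex.exp ((2 * Real.pi * y * s : ℝ) * Complex.I) := by
    rw [Real.fourierChar_apply, mul_comm s, ← mul_assoc]
  refine mul_left_cancel₀ hc ?_
  calc (2 * Real.pi * y : ℂ) * ∫ s in (-(1 / 2))..(1 / 2), (Real.fourierChar (s * y) : ℂ)
    _ = (2 * Real.pi * y : ℝ) • ∫ s in (-(1 / 2))..(1 / 2),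
        Complex.exp ((2 * Real.pi * y * s : ℝ) * Complex.I) := by
      simp only [h_char, Complex.real_smul, Complex.ofReal_mul, Complex.ofReal_ofNat]
    _ = ∫ t in -(Real.pi * y)..(Real.pi * y), Complex.exp (t * Complex.I) := by
      rw [intervalIntegral.smul_integral_comp_mul_left
        (fun t : ℝ ↦ Complex.exp (t * Complex.I)) (2 * Real.pi * y)]
      ring_nf
    _ = 2 * Real.pi * y * Real.sinc (Real.pi * y) := by
      rw [integral_exp_mul_I_eq_sinc]
      push_cast
      ring

variable {ι : Type*} [Fintype ι]

lemma setIntegral_unitCube_prod (f : ι → ℝ → ℂ) :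
    ∫ ξ in unitCube 0, ∏ i, f i (ξ i) = ∏ i, ∫ s in (-(1 / 2))..(1 / 2), f i s := by
  have h_preimage : unitCube (0 : ι → ℤ) =
      WithLp.ofLp ⁻¹' Set.univ.pi fun _ ↦ Set.Ioc (-(1 / 2) : ℝ) (1 / 2) := by
    ext ξ
    norm_num [unitCube]
  rw [h_preimage, (PiLp.volume_preserving_ofLp ι).setIntegral_preimage_emb
    (MeasurableEquiv.toLp 2 (ι → ℝ)).symm.measurableEmbedding (fun ξ ↦ ∏ i, f i (ξ i)),
    volume_pi, Measure.restrict_pi_pi, integral_fintype_prod_eq_prod]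
  simp only [intervalIntegral.integral_of_le (by norm_num : (-(1 / 2) : ℝ) ≤ 1 / 2)]

lemma setIntegral_unitCube_fourierChar (y : EuclideanSpace ℝ ι) :
    ∫ ξ in unitCube 0, (Real.fourierChar (inner ℝ ξ y) : ℂ) = ∏ i, Real.sinc (Real.pi * y i) := by
  have h_prod (ξ : EuclideanSpace ℝ ι) :
      (Real.fourierChar (inner ℝ ξ y) : ℂ) = ∏ i, (Real.fourierChar (ξ i * y i) : ℂ) := by
    simp only [Real.fourierChar_apply, PiLp.inner_apply, ← Complex.exp_sum, Finset.mul_sum,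
      Complex.ofReal_sum, Finset.sum_mul, Real.inner_apply]
  simp only [h_prod, Complex.ofReal_prod, ← integral_fourierChar_eq_sinc]
  exact setIntegral_unitCube_prod fun i s ↦ (Real.fourierChar (s * y i) : ℂ)

lemma fourier_indicator_unitCube (n : ι → ℤ) (x : EuclideanSpace ℝ ι) :
    𝓕 ((unitCube 0).indicator (mFourier n ∘ toTorus)) x =
      ∏ i, Real.sinc (Real.pi * (x i - n i)) := by
  have h_char (ξ : EuclideanSpace ℝ ι) :
      Real.fourierChar (-inner ℝ ξ x) • (mFourier n ∘ toTorus) ξ =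
        Real.fourierChar (inner ℝ ξ (intPoint n - x)) := by
    rw [Function.comp_apply, mFourier_toTorus, Circle.smul_def, smul_eq_mul, ← Circle.coe_mul,
      ← AddChar.map_add_eq_mul, inner_sub_right, neg_add_eq_sub]
  simp only [Real.fourier_eq, ← Set.indicator_smul]
  rw [integral_indicator (measurableSet_unitCube 0)]
  simp only [h_char, setIntegral_unitCube_fourierChar]
  push_cast
  refine Finset.prod_congr rfl fun i _ ↦ ?_
  rw [← Real.sinc_neg, ← mul_neg, PiLp.sub_apply, neg_sub]
  rfl

lemma memLp_mFourier (n : ι → ℤ) (q : ℝ≥0∞) : MemLp (mFourier n) q volume :=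
  .of_bound (mFourier n).continuous.aestronglyMeasurable 1 <| Eventually.of_forall fun t ↦
    ((mFourier n).norm_coe_le_norm t).trans mFourier_norm.le

lemma coeFn_fourier_cubeExtension_mFourierLp (n : ι → ℤ) :
    (𝓕 (cubeExtension (mFourierLp 2 n)) : Lp ℂ 2 (volume : Measure (EuclideanSpace ℝ ι)))
      =ᵐ[volume] fun x ↦ ((∏ i, Real.sinc (Real.pi * (x i - n i)) : ℝ) : ℂ) := by
  have h_mem := memLp_indicator_comp_toTorus (memLp_mFourier n 2)
  have h_int : Integrable ((unitCube 0).indicator (mFourier n ∘ toTorus)) :=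
    memLp_one_iff_integrable.1 (memLp_indicator_comp_toTorus (memLp_mFourier n 1))
  have h_ext : cubeExtension (mFourierLp 2 n) = h_mem.toLp :=
    Lp.ext <| (coeFn_cubeExtension _).trans <|
      (indicator_comp_toTorus_congr_ae (coeFn_mFourierLp 2 n)).trans h_mem.coeFn_toLp.symm
  rw [h_ext]
  refine (coeFn_fourier_toLp h_int h_mem).trans (Eventually.of_forall fun x ↦ ?_)
  rw [fourier_indicator_unitCube]

end Sinc

section Sampling

open FourierTransform UnitAddTorus

attribute [local instance] haarMeasureSpaceUnitAddCircle isAddHaarMeasure_unitAddCircle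
  isProbabilityMeasure_unitAddCircle

lemma HasSumL2.of_hasSum_re {d : ℕ}
    {F : (Fin d → ℤ) → Lp ℂ 2 (volume : Measure (EuclideanSpace ℝ (Fin d)))}
    {G : Lp ℂ 2 (volume : Measure (EuclideanSpace ℝ (Fin d)))} (h : HasSum F G)
    {f : (Fin d → ℤ) → EuclideanSpace ℝ (Fin d) → ℝ} {g : EuclideanSpace ℝ (Fin d) → ℝ}
    (hf : ∀ n, (fun x ↦ (F n x).re) =ᵐ[volume] f n) (hg : (fun x ↦ (G x).re) =ᵐ[volume] g) :
    HasSumL2 d f g := by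
  have h_lim : Tendsto (fun s : Finset (Fin d → ℤ) ↦ ‖G - ∑ n ∈ s, F n‖ₑ) atTop (𝓝 0) := by
    simpa [edist_eq_enorm_sub] using (tendsto_const_nhds (x := G)).edist h
  refine tendsto_of_tendsto_of_tendsto_of_le_of_le tendsto_const_nhds h_lim
    (fun _ ↦ zero_le) fun s ↦ ?_
  rw [Lp.enorm_def]
  refine eLpNorm_mono_ae ?_
  filter_upwards [Lp.coeFn_sub G (∑ n ∈ s, F n), Lp.coeFn_finsetSum s F, hg,
    (ae_all_iff.2 hf : ∀ᵐ x, ∀ n, (F n x).re = f n x)] with x h_sub h_sum hgx hfx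
  rw [h_sub, Pi.sub_apply, h_sum, Finset.sum_apply, ← hgx]
  simp only [← hfx, ← Complex.re_sum, ← Complex.sub_re]
  exact Complex.abs_re_le_norm _

section Remainder

variable {ι : Type*} [Fintype ι] {g : EuclideanSpace ℝ ι → ℂ}

/-- The error made by replacing `g` with the restriction of its periodisation to the unit cube,
seen on the Fourier side: the difference between `𝓕 g` and its cardinal series. -/
def samplingRemainder (hg : MemLp g 2 volume) :
    Lp ℂ 2 (volume : Measure (EuclideanSpace ℝ ι)) :=
  𝓕 (hg.toLp g - cubeExtension (periodization hg))

lemma norm_samplingRemainder_le (hg : MemLp g 2 volume)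
    (hs : Summable fun k ↦ (eLpNorm g 2 (volume.restrict (unitCube k))).toReal) :
    ‖samplingRemainder hg‖ ≤
      (eLpNorm g 2 (volume.restrict (unitCube 0)ᶜ)).toReal +
        ∑' k : {k : ι → ℤ // k ≠ 0}, (eLpNorm g 2 (volume.restrict (unitCube k.1))).toReal :=
  (Lp.norm_fourier_eq _).trans_le (norm_toLp_sub_cubeExtension_periodization_le hg hs)

/-- The Whittaker–Kotelnikov–Shannon expansion, with the aliasing error when `g` is not supported
in the unit cube. -/
theorem hasSum_fourier_smul_fourier_cubeExtension (hg : MemLp g 2 volume) (hg1 : Integrable g)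
    (hs : Summable fun k ↦ (eLpNorm g 2 (volume.restrict (unitCube k))).toReal) :
    HasSum (fun n ↦ 𝓕 g (intPoint n) •
        (𝓕 (cubeExtension (mFourierLp 2 n)) : Lp ℂ 2 (volume : Measure (EuclideanSpace ℝ ι))))
      (𝓕 (hg.toLp g) - samplingRemainder hg) := by
  simp only [← norm_torusPiece hg] at hs
  let fourierEquiv := Lp.fourierTransformₗᵢ (EuclideanSpace ℝ ι) ℂ
  have h_sum : 𝓕 (hg.toLp g) - samplingRemainder hg = 𝓕 (cubeExtension (periodization hg)) :=
    (map_sub fourierEquiv _ _).symm.trans (congrArg fourierEquiv (sub_sub_cancel _ _))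
  rw [h_sum]
  have h_map := (hasSum_fourier_smul_cubeExtension hg hg1 hs.of_norm).map fourierEquiv
    fourierEquiv.continuous
  simp only [Function.comp_def, map_smul] at h_map
  exact h_map

end Remainder

theorem hasSumL2_heatSol_mul_fN {d : ℕ} {u₀ : EuclideanSpace ℝ (Fin d) → ℝ}
    {v : Lp ℂ 2 (volume : Measure (EuclideanSpace ℝ (Fin d)))}
    (hv : (𝓕 v : Lp ℂ 2 (volume : Measure (EuclideanSpace ℝ (Fin d)))) =ᵐ[volume]
      fun y ↦ (u₀ y : ℂ))
    {T : ℝ} (hT : 0 < T)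
    (hs : Summable fun k ↦ (eLpNorm (heatMul T v) 2 (volume.restrict (unitCube k))).toReal) :
    HasSumL2 d (fun n x ↦ heatSol d u₀ T (intPoint n) * fN d 1 n x)
      fun x ↦ heatSol d u₀ T x - (samplingRemainder (memLp_heatMul hT (Lp.memLp v)) x).re := by
  have hg := memLp_heatMul hT (Lp.memLp v)
  have hg1 := integrable_heatMul hT (Lp.memLp v)
  refine .of_hasSum_re (hasSum_fourier_smul_fourier_cubeExtension hg hg1 hs) (fun n ↦ ?_) ?_
  · filter_upwards [Lp.coeFn_smul (𝓕 (heatMul T v) (intPoint n))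
      (𝓕 (cubeExtension (mFourierLp 2 n)) : Lp ℂ 2 volume),
      coeFn_fourier_cubeExtension_mFourierLp n] with x h_smul h_sinc
    rw [h_smul, Pi.smul_apply, h_sinc, ← heatSol_eq_fourier hv hT, smul_eq_mul,
      ← Complex.ofReal_mul, Complex.ofReal_re, fN_eq_prod_sinc]
    simp only [one_mul]
  · filter_upwards [Lp.coeFn_sub (𝓕 (hg.toLp (heatMul T v))) (samplingRemainder hg),
      coeFn_fourier_toLp hg1 hg] with x h_sub h_fourier
    rw [h_sub, Pi.sub_apply, h_fourier, ← heatSol_eq_fourier hv hT, Complex.sub_re,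
      Complex.ofReal_re]

end Sampling

section ThetaSum

variable {a : ℝ}

lemma sum_range_exp_neg_mul_add_one_sq_le (ha : 0 < a) (n : ℕ) :
    ∑ i ∈ Finset.range n, Real.exp (-a * (i + 1) ^ 2) ≤ √(Real.pi / a) / 2 := by
  have h_anti : AntitoneOn (fun x : ℝ ↦ Real.exp (-a * x ^ 2)) (Set.Icc 0 (0 + n)) := by
    intro x hx y _ hxy
    have := hx.1
    simp only [neg_mul]
    gcongr
  calc ∑ i ∈ Finset.range n, Real.exp (-a * (i + 1) ^ 2)
    _ ≤ ∫ x in 0..(n : ℝ), Real.exp (-a * x ^ 2) := by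
      simpa using h_anti.sum_le_integral
    _ ≤ ∫ x in Set.Ioi 0, Real.exp (-a * x ^ 2) := by
      rw [intervalIntegral.integral_of_le n.cast_nonneg]
      exact setIntegral_mono_set (integrable_exp_neg_mul_sq ha).integrableOn
        (Eventually.of_forall fun x ↦ (Real.exp_pos _).le) Set.Ioc_subset_Ioi_self.eventuallyLE
    _ = √(Real.pi / a) / 2 := integral_gaussian_Ioi a

lemma sum_int_exp_neg_mul_sq_le (ha : 0 < a) (s : Finset ℤ) :
    ∑ m ∈ s, Real.exp (-a * m ^ 2) ≤ 1 + √(Real.pi / a) := by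
  have h_nonneg (i : ℕ) : 0 ≤ Real.exp (-a * (i + 1) ^ 2) := (Real.exp_pos _).le
  have h_summable := summable_of_sum_range_le h_nonneg (sum_range_exp_neg_mul_add_one_sq_le ha)
  have h_tsum := Real.tsum_le_of_sum_range_le h_nonneg (sum_range_exp_neg_mul_add_one_sq_le ha)
  have h_int : HasSum (fun m : ℤ ↦ Real.exp (-a * m ^ 2))
      (∑' i : ℕ, Real.exp (-a * (i + 1) ^ 2) + Real.exp (-a * (0 : ℤ) ^ 2) +
        ∑' i : ℕ, Real.exp (-a * (i + 1) ^ 2)) := by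
    refine .of_add_one_of_neg_add_one ?_ ?_
    · simpa using h_summable.hasSum
    · simpa [← neg_add, neg_sq, -neg_add_rev] using h_summable.hasSum
  have h_zero : Real.exp (-a * (0 : ℤ) ^ 2) = 1 := by simp
  linarith [sum_le_hasSum s (fun m _ ↦ (Real.exp_pos _).le) h_int]

lemma sum_exp_neg_mul_norm_intPoint_sq_le {ι : Type*} [Fintype ι] (ha : 0 < a)
    (s : Finset (ι → ℤ)) :
    ∑ k ∈ s, Real.exp (-a * ‖intPoint k‖ ^ 2) ≤ (1 + √(Real.pi / a)) ^ Fintype.card ι := by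
  classical
  let proj (i : ι) : Finset ℤ := s.image fun k ↦ k i
  have h_subset : s ⊆ Fintype.piFinset proj := fun k hk ↦
    Fintype.mem_piFinset.2 fun i ↦ Finset.mem_image_of_mem (fun k : ι → ℤ ↦ k i) hk
  calc ∑ k ∈ s, Real.exp (-a * ‖intPoint k‖ ^ 2)
    _ ≤ ∑ k ∈ Fintype.piFinset proj, Real.exp (-a * ‖intPoint k‖ ^ 2) :=
      Finset.sum_le_sum_of_subset_of_nonneg h_subset fun _ _ _ ↦ (Real.exp_pos _).le
    _ = ∑ k ∈ Fintype.piFinset proj, ∏ i, Real.exp (-a * k i ^ 2) := by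
      simp only [EuclideanSpace.real_norm_sq_eq, intPoint, Finset.mul_sum, Real.exp_sum]
    _ = ∏ i, ∑ m ∈ proj i, Real.exp (-a * m ^ 2) :=
      (Finset.prod_univ_sum proj fun _ m ↦ Real.exp (-a * (m : ℝ) ^ 2)).symm
    _ ≤ ∏ _i : ι, (1 + √(Real.pi / a)) :=
      Finset.prod_le_prod (fun _ _ ↦ Finset.sum_nonneg fun _ _ ↦ (Real.exp_pos _).le)
        fun i _ ↦ sum_int_exp_neg_mul_sq_le ha (proj i)
    _ = (1 + √(Real.pi / a)) ^ Fintype.card ι := by rw [Finset.prod_const, Finset.card_univ]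

lemma sqrt_one_add_sqrt_pi_div_pow_le (ha : 0 < a) (d : ℕ) :
    √((1 + √(Real.pi / a)) ^ d) ≤ 2 ^ d * (1 + a ^ (-(d : ℝ) / 4)) := by
  set y := a ^ (-(d : ℝ) / 4)
  have hy : 0 ≤ y := Real.rpow_nonneg ha.le _
  have h_pow : (√a)⁻¹ ^ d = y ^ 2 := by
    rw [Real.sqrt_eq_rpow, ← Real.rpow_neg ha.le, ← Real.rpow_mul_natCast ha.le,
      ← Real.rpow_mul_natCast ha.le]
    congr 1
    push_cast
    ring
  have h_sqrt : √(Real.pi / a) ≤ 2 * (√a)⁻¹ := by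
    rw [Real.sqrt_div' _ ha.le, div_eq_mul_inv]
    gcongr
    exact Real.sqrt_le_iff.2 ⟨zero_le_two, by linarith [Real.pi_le_four]⟩
  refine Real.sqrt_le_iff.2 ⟨by positivity, ?_⟩
  calc (1 + √(Real.pi / a)) ^ d
    _ ≤ (2 * (1 + (√a)⁻¹)) ^ d := by
      gcongr
      linarith
    _ = 2 ^ d * (1 + (√a)⁻¹) ^ d := mul_pow _ _ _
    _ ≤ 2 ^ d * (2 ^ (d - 1) * (1 ^ d + (√a)⁻¹ ^ d)) := by
      gcongr
      exact add_pow_le zero_le_one (by positivity) d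
    _ ≤ 2 ^ d * (2 ^ d * (1 + y ^ 2)) := by
      rw [one_pow, h_pow]
      gcongr
      · exact one_le_two
      · exact d.sub_le 1
    _ ≤ (2 ^ d * (1 + y)) ^ 2 := by
      rw [← mul_assoc, ← sq, mul_pow]
      gcongr
      nlinarith

end ThetaSum

section UnitScale

open FourierTransform

section Cubes

variable {ι : Type*} [Fintype ι]

lemma norm_intPoint_div_two_le {k : ι → ℤ} {ξ : EuclideanSpace ℝ ι} (hξ : ξ ∈ unitCube k) :
    ‖intPoint k‖ / 2 ≤ ‖ξ‖ := by
  have h_coord (i : ι) : (k i : ℝ) ^ 2 ≤ 4 * ξ i ^ 2 := by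
    obtain ⟨h_lt, h_le⟩ := hξ i
    rcases lt_trichotomy (k i) 0 with hk | hk | hk
    · have : (k i : ℝ) ≤ -1 := by exact_mod_cast Int.le_sub_one_of_lt hk
      nlinarith
    · rw [hk]
      norm_num
      positivity
    · have : (1 : ℝ) ≤ k i := by exact_mod_cast hk
      nlinarith
  refine (pow_le_pow_iff_left₀ (by positivity) (norm_nonneg ξ) two_ne_zero).1 ?_
  rw [div_pow, div_le_iff₀' (by norm_num), EuclideanSpace.real_norm_sq_eq,
    EuclideanSpace.real_norm_sq_eq, Finset.mul_sum]
  refine Finset.sum_le_sum fun i _ ↦ (h_coord i).trans_eq ?_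
  norm_num

lemma one_le_norm_intPoint {k : ι → ℤ} (hk : k ≠ 0) : 1 ≤ ‖intPoint k‖ := by
  obtain ⟨i, hi⟩ := Function.ne_iff.1 hk
  calc (1 : ℝ)
    _ ≤ ‖(k i : ℝ)‖ := by
      rw [Real.norm_eq_abs]
      exact_mod_cast Int.one_le_abs hi
    _ ≤ ‖intPoint k‖ := PiLp.norm_apply_le (intPoint k) i

lemma half_le_norm_of_notMem_unitCube {ξ : EuclideanSpace ℝ ι} (hξ : ξ ∉ unitCube 0) :
    1 / 2 ≤ ‖ξ‖ := by
  obtain ⟨k, hk⟩ := Set.mem_iUnion.1 (iUnion_unitCube.symm ▸ Set.mem_univ ξ)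
  have hk0 : k ≠ 0 := by
    rintro rfl
    exact hξ hk
  linarith [one_le_norm_intPoint hk0, norm_intPoint_div_two_le hk]

lemma sum_sq_eLpNorm_restrict_unitCube_le {v : EuclideanSpace ℝ ι → ℂ} (hv : MemLp v 2)
    (s : Finset (ι → ℤ)) :
    ∑ k ∈ s, (eLpNorm v 2 (volume.restrict (unitCube k))).toReal ^ 2 ≤
      (eLpNorm v 2).toReal ^ 2 := by
  have h_sq (μ : Measure (EuclideanSpace ℝ ι)) : eLpNorm v 2 μ ^ 2 = ∫⁻ ξ, ‖v ξ‖ₑ ^ 2 ∂μ := by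
    simpa using eLpNorm_nnreal_pow_eq_lintegral (f := v) (μ := μ) (p := 2) two_ne_zero
  simp only [← ENNReal.toReal_pow]
  rw [← ENNReal.toReal_sum fun k _ ↦ ENNReal.pow_ne_top (hv.restrict _).eLpNorm_ne_top]
  refine ENNReal.toReal_mono (ENNReal.pow_ne_top hv.eLpNorm_ne_top) ?_
  simp only [h_sq]
  rw [← lintegral_biUnion_finset (fun k _ l _ hkl ↦ pairwise_disjoint_unitCube hkl)
    fun k _ ↦ measurableSet_unitCube k]
  exact setLIntegral_le_lintegral _ _

end Cubes

section HeatDecay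

variable {ι : Type*} [Fintype ι] {v : EuclideanSpace ℝ ι → ℂ} {T : ℝ}

lemma eLpNorm_heatMul_restrict_le (hT : 0 ≤ T) (hv : MemLp v 2) {r : ℝ} (hr : 0 ≤ r)
    {S : Set (EuclideanSpace ℝ ι)} (hS : MeasurableSet S) (hrS : ∀ ξ ∈ S, r ≤ ‖ξ‖) :
    (eLpNorm (heatMul T v) 2 (volume.restrict S)).toReal ≤
      Real.exp (-(4 * Real.pi ^ 2 * T * r ^ 2)) * (eLpNorm v 2 (volume.restrict S)).toReal := by
  have h_le : eLpNorm (heatMul T v) 2 (volume.restrict S) ≤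
      ENNReal.ofReal (Real.exp (-(4 * Real.pi ^ 2 * T * r ^ 2))) *
        eLpNorm v 2 (volume.restrict S) := by
    refine eLpNorm_le_mul_eLpNorm_of_ae_le_mul ?_ 2
    filter_upwards [ae_restrict_mem hS] with ξ hξ
    exact norm_heatMul_le_of_norm_le hT v hr (hrS ξ hξ)
  simpa [ENNReal.toReal_mul, Real.exp_nonneg] using ENNReal.toReal_mono
    (ENNReal.mul_ne_top ENNReal.ofReal_ne_top (hv.restrict S).eLpNorm_ne_top) h_le

lemma eLpNorm_heatMul_restrict_compl_unitCube_le (hT : 0 ≤ T) (hv : MemLp v 2) :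
    (eLpNorm (heatMul T v) 2 (volume.restrict (unitCube 0)ᶜ)).toReal ≤
      Real.exp (-T) * (eLpNorm v 2).toReal := by
  refine (eLpNorm_heatMul_restrict_le hT hv one_half_pos.le (measurableSet_unitCube 0).compl
    fun ξ hξ ↦ half_le_norm_of_notMem_unitCube hξ).trans ?_
  gcongr
  · have h_pi : 1 ≤ Real.pi ^ 2 := by nlinarith [Real.pi_gt_three]
    linarith [mul_le_mul_of_nonneg_right h_pi hT]
  · exact hv.eLpNorm_ne_top
  · exact Measure.restrict_le_self

lemma eLpNorm_heatMul_restrict_unitCube_le (hT : 0 ≤ T) (hv : MemLp v 2) {k : ι → ℤ}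
    (hk : k ≠ 0) :
    (eLpNorm (heatMul T v) 2 (volume.restrict (unitCube k))).toReal ≤
      Real.exp (-T) * (Real.exp (-(T / 2) * ‖intPoint k‖ ^ 2) *
        (eLpNorm v 2 (volume.restrict (unitCube k))).toReal) := by
  refine (eLpNorm_heatMul_restrict_le hT hv (by positivity) (measurableSet_unitCube k)
    fun ξ hξ ↦ norm_intPoint_div_two_le hξ).trans ?_
  rw [← mul_assoc, ← Real.exp_add]
  gcongr
  have h_norm : 1 ≤ ‖intPoint k‖ ^ 2 := one_le_pow₀ (one_le_norm_intPoint hk)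
  have h_pi : 9 ≤ Real.pi ^ 2 := by nlinarith [Real.pi_gt_three]
  have : 1 + ‖intPoint k‖ ^ 2 / 2 ≤ Real.pi ^ 2 * ‖intPoint k‖ ^ 2 := by nlinarith
  nlinarith [mul_le_mul_of_nonneg_left this hT]

lemma sum_eLpNorm_heatMul_restrict_unitCube_le (hT : 0 < T) (hv : MemLp v 2)
    {s : Finset (ι → ℤ)} (hs : 0 ∉ s) :
    ∑ k ∈ s, (eLpNorm (heatMul T v) 2 (volume.restrict (unitCube k))).toReal ≤
      Real.exp (-T) * (√((1 + √(Real.pi / T)) ^ Fintype.card ι) * (eLpNorm v 2).toReal) := by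
  have h_weight (k : ι → ℤ) :
      Real.exp (-(T / 2) * ‖intPoint k‖ ^ 2) ^ 2 = Real.exp (-T * ‖intPoint k‖ ^ 2) := by
    rw [← Real.exp_nat_mul]
    ring_nf
  calc ∑ k ∈ s, (eLpNorm (heatMul T v) 2 (volume.restrict (unitCube k))).toReal
    _ ≤ ∑ k ∈ s, Real.exp (-T) * (Real.exp (-(T / 2) * ‖intPoint k‖ ^ 2) *
        (eLpNorm v 2 (volume.restrict (unitCube k))).toReal) :=
      Finset.sum_le_sum fun k hk ↦
        eLpNorm_heatMul_restrict_unitCube_le hT.le hv (ne_of_mem_of_not_mem hk hs)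
    _ ≤ Real.exp (-T) * (√(∑ k ∈ s, Real.exp (-(T / 2) * ‖intPoint k‖ ^ 2) ^ 2) *
        √(∑ k ∈ s, (eLpNorm v 2 (volume.restrict (unitCube k))).toReal ^ 2)) := by
      rw [← Finset.mul_sum]
      gcongr
      exact Real.sum_mul_le_sqrt_mul_sqrt _ _ _
    _ ≤ _ := by
      simp only [h_weight]
      gcongr
      · exact sum_exp_neg_mul_norm_intPoint_sq_le hT s
      · exact Real.sqrt_le_iff.2
          ⟨ENNReal.toReal_nonneg, sum_sq_eLpNorm_restrict_unitCube_le hv s⟩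

lemma sum_subtype_eLpNorm_heatMul_restrict_unitCube_le (hT : 0 < T) (hv : MemLp v 2)
    (s : Finset {k : ι → ℤ // k ≠ 0}) :
    ∑ k ∈ s, (eLpNorm (heatMul T v) 2 (volume.restrict (unitCube k.1))).toReal ≤
      Real.exp (-T) * (√((1 + √(Real.pi / T)) ^ Fintype.card ι) * (eLpNorm v 2).toReal) := by
  have h_zero : 0 ∉ s.map (Function.Embedding.subtype _) := by simp
  simpa using sum_eLpNorm_heatMul_restrict_unitCube_le hT hv h_zero

lemma summable_eLpNorm_heatMul_restrict_unitCube (hT : 0 < T) (hv : MemLp v 2) :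
    Summable fun k ↦ (eLpNorm (heatMul T v) 2 (volume.restrict (unitCube k))).toReal :=
  (Set.finite_singleton (0 : ι → ℤ)).summable_compl_iff.1 <|
    summable_of_sum_le (fun _ ↦ ENNReal.toReal_nonneg)
      (sum_subtype_eLpNorm_heatMul_restrict_unitCube_le hT hv)

lemma tsum_eLpNorm_heatMul_restrict_unitCube_le (hT : 0 < T) (hv : MemLp v 2) :
    ∑' k : {k : ι → ℤ // k ≠ 0},
        (eLpNorm (heatMul T v) 2 (volume.restrict (unitCube k.1))).toReal ≤
      Real.exp (-T) * (√((1 + √(Real.pi / T)) ^ Fintype.card ι) * (eLpNorm v 2).toReal) :=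
  Real.tsum_le_of_sum_le (fun _ ↦ ENNReal.toReal_nonneg)
    (sum_subtype_eLpNorm_heatMul_restrict_unitCube_le hT hv)

lemma norm_samplingRemainder_heatMul_le (hT : 0 < T) (hv : MemLp v 2) :
    ‖samplingRemainder (memLp_heatMul hT hv)‖ ≤
      (1 + 2 ^ Fintype.card ι) * (1 + T ^ (-(Fintype.card ι : ℝ) / 4)) * Real.exp (-T) *
        (eLpNorm v 2).toReal := by
  have h_rem := norm_samplingRemainder_le (memLp_heatMul hT hv)
    (summable_eLpNorm_heatMul_restrict_unitCube hT hv)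
  have h_compl := eLpNorm_heatMul_restrict_compl_unitCube_le hT.le hv
  have h_tsum := tsum_eLpNorm_heatMul_restrict_unitCube_le hT hv
  have h_const : 1 + √((1 + √(Real.pi / T)) ^ Fintype.card ι) ≤
      (1 + 2 ^ Fintype.card ι) * (1 + T ^ (-(Fintype.card ι : ℝ) / 4)) := by
    linarith [sqrt_one_add_sqrt_pi_div_pow_le hT (Fintype.card ι), Real.rpow_nonneg hT.le
      (-(Fintype.card ι : ℝ) / 4)]
  have h_mul := mul_le_mul_of_nonneg_right h_const
    (mul_nonneg (Real.exp_nonneg (-T)) (ENNReal.toReal_nonneg (a := eLpNorm v 2)))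
  linarith

end HeatDecay

theorem exists_hasSumL2_heatSol_mul_fN_one {d : ℕ} {u₀ : EuclideanSpace ℝ (Fin d) → ℝ}
    (hu : MemLp u₀ 2) {T : ℝ} (hT : 0 < T) :
    ∃ R : EuclideanSpace ℝ (Fin d) → ℝ, MemLp R 2 ∧
      l2norm d R ≤
        (1 + 2 ^ d) * (1 + T ^ (-(d : ℝ) / 4)) * Real.exp (-T) * l2norm d u₀ ∧
      HasSumL2 d (fun n x ↦ heatSol d u₀ T (intPoint n) * fN d 1 n x)
        fun x ↦ heatSol d u₀ T x - R x := by
  have huc : MemLp (fun y ↦ (u₀ y : ℂ)) 2 := hu.ofReal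
  let v : Lp ℂ 2 (volume : Measure (EuclideanSpace ℝ (Fin d))) := 𝓕⁻ (huc.toLp)
  have hv : (𝓕 v : Lp ℂ 2 (volume : Measure (EuclideanSpace ℝ (Fin d)))) =ᵐ[volume]
      fun y ↦ (u₀ y : ℂ) := by
    rw [FourierTransform.fourier_fourierInv_eq]
    exact huc.coeFn_toLp
  have hv_norm : (eLpNorm v 2).toReal = l2norm d u₀ := by
    rw [← Lp.norm_def, ← Lp.norm_fourier_eq, Lp.norm_def, eLpNorm_congr_ae hv, l2norm]
    congr 1
    exact eLpNorm_congr_norm_ae (by simp)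
  let R := samplingRemainder (memLp_heatMul hT (Lp.memLp v))
  refine ⟨fun x ↦ (R x).re, (Lp.memLp R).re, ?_,
    hasSumL2_heatSol_mul_fN hv hT (summable_eLpNorm_heatMul_restrict_unitCube hT (Lp.memLp v))⟩
  calc l2norm d (fun x ↦ (R x).re)
    _ ≤ ‖R‖ := ENNReal.toReal_mono (Lp.eLpNorm_ne_top R)
      (eLpNorm_mono fun x ↦ Complex.abs_re_le_norm _)
    _ ≤ _ := by
      simpa [hv_norm] using norm_samplingRemainder_heatMul_le hT (Lp.memLp v)

end UnitScale

section Dilation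

section AddHaar

variable {E F : Type*} [NormedAddCommGroup E] [NormedSpace ℝ E] [FiniteDimensional ℝ E]
  [MeasurableSpace E] [BorelSpace E] [NormedAddCommGroup F] {μ : Measure E} [μ.IsAddHaarMeasure]

lemma eLpNorm_comp_smul {N : ℝ} (hN : N ≠ 0) (f : E → F) (p : ℝ≥0∞) :
    eLpNorm (fun x ↦ f (N • x)) p μ =
      ENNReal.ofReal |(N ^ Module.finrank ℝ E)⁻¹| ^ (1 / p).toReal * eLpNorm f p μ := by
  rw [← smul_eq_mul, ← eLpNorm_smul_measure_of_ne_zero (by positivity),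
    ← Measure.map_addHaar_smul μ hN]
  exact ((Homeomorph.smulOfNeZero N hN).measurableEmbedding.eLpNorm_map_measure).symm

lemma memLp_comp_smul {N : ℝ} (hN : N ≠ 0) {f : E → F} {p : ℝ≥0∞} (hf : MemLp f p μ) :
    MemLp (fun x ↦ f (N • x)) p μ := by
  refine ((Homeomorph.smulOfNeZero N hN).measurableEmbedding.memLp_map_measure_iff).1 ?_
  exact (Measure.map_addHaar_smul μ hN).symm ▸ hf.smul_measure ENNReal.ofReal_ne_top

end AddHaar

variable {d : ℕ} {N : ℝ}

lemma l2norm_comp_smul_le {V : Type} [NormedAddCommGroup V] (hN : N ≠ 0) {c : ℝ}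
    {f g : EuclideanSpace ℝ (Fin d) → V} (h : l2norm d f ≤ c * l2norm d g) :
    l2norm d (fun x ↦ f (N • x)) ≤ c * l2norm d fun x ↦ g (N • x) := by
  simp only [l2norm, eLpNorm_comp_smul hN, ENNReal.toReal_mul] at h ⊢
  rw [mul_left_comm]
  gcongr

lemma HasSumL2.comp_smul {V : Type} [NormedAddCommGroup V] (hN : N ≠ 0)
    {f : (Fin d → ℤ) → EuclideanSpace ℝ (Fin d) → V} {g : EuclideanSpace ℝ (Fin d) → V}
    (h : HasSumL2 d f g) : HasSumL2 d (fun n x ↦ f n (N • x)) fun x ↦ g (N • x) := by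
  have h_ne_top : ENNReal.ofReal |(N ^ Module.finrank ℝ (EuclideanSpace ℝ (Fin d)))⁻¹| ^
      (1 / 2 : ℝ≥0∞).toReal ≠ ⊤ :=
    ENNReal.rpow_ne_top_of_nonneg ENNReal.toReal_nonneg ENNReal.ofReal_ne_top
  have h_lim := ENNReal.Tendsto.const_mul h (Or.inr h_ne_top)
  rw [mul_zero] at h_lim
  exact h_lim.congr fun s ↦ (eLpNorm_comp_smul hN (fun x ↦ g x - ∑ n ∈ s, f n x) 2).symm

lemma heatSol_comp_inv_smul (hN : 0 < N) {T : ℝ} (hT : 0 ≤ T)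
    (u₀ : EuclideanSpace ℝ (Fin d) → ℝ) (x : EuclideanSpace ℝ (Fin d)) :
    heatSol d (fun y ↦ u₀ (N⁻¹ • y)) (T * N ^ 2) (N • x) = heatSol d u₀ T x := by
  have h_kernel (y : EuclideanSpace ℝ (Fin d)) :
      -‖N • x - y‖ ^ 2 / (4 * (T * N ^ 2)) = -‖x - N⁻¹ • y‖ ^ 2 / (4 * T) := by
    rw [show N • x - y = N • (x - N⁻¹ • y) by rw [smul_sub, smul_inv_smul₀ hN.ne'], norm_smul,
      Real.norm_of_nonneg hN.le]
    field_simp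
  have h_const : (4 * Real.pi * (T * N ^ 2)) ^ (-(d : ℝ) / 2) * N ^ d =
      (4 * Real.pi * T) ^ (-(d : ℝ) / 2) := by
    rw [← mul_assoc, Real.mul_rpow (by positivity) (by positivity), mul_assoc,
      ← Real.rpow_natCast N 2, ← Real.rpow_mul hN.le, ← Real.rpow_natCast N d,
      ← Real.rpow_add hN]
    ring_nf
    simp
  simp only [heatSol, h_kernel]
  rw [Measure.integral_comp_inv_smul_of_nonneg volume
    (fun y ↦ Real.exp (-‖x - y‖ ^ 2 / (4 * T)) * u₀ y) hN.le, finrank_euclideanSpace_fin,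
    smul_eq_mul, ← mul_assoc, h_const]

lemma intPoint_eq_smul_latticePt (hN : N ≠ 0) (n : Fin d → ℤ) :
    intPoint n = N • latticePt d N n := by
  ext i
  exact (mul_div_cancel₀ _ hN).symm

lemma fN_one_smul (n : Fin d → ℤ) (x : EuclideanSpace ℝ (Fin d)) :
    fN d 1 n (N • x) = fN d N n x := by
  simp [fN]

end Dilation

/-- Asymptotic observability identity: there is `C = C(d) > 0` such that for every
`u₀ ∈ L²(ℝ^d)`, `T > 0`, `N > 0` there exists `R ∈ L²(ℝ^d)` with
`‖R‖ ≤ C (1 + (TN²)^{-d/4}) e^{-TN²} ‖u₀‖` and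
`u(T,·) = Σ_{n ∈ ℤ^d} u(T, n/N) f_{N,n} + R` in `L²(ℝ^d)`. -/
theorem statement1 (d : ℕ) (hd : 0 < d) :
    ∃ C : ℝ, 0 < C ∧
      ∀ u₀ : EuclideanSpace ℝ (Fin d) → ℝ, MemLp u₀ 2 volume →
      ∀ T N : ℝ, 0 < T → 0 < N →
        ∃ R : EuclideanSpace ℝ (Fin d) → ℝ, MemLp R 2 volume ∧
          l2norm d R ≤
            C * (1 + (T * N ^ 2) ^ (-(d : ℝ) / 4)) * Real.exp (-(T * N ^ 2)) * l2norm d u₀ ∧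
          HasSumL2 d (fun n x => heatSol d u₀ T (latticePt d N n) * fN d N n x)
            (fun x => heatSol d u₀ T x - R x) := by
  refine ⟨1 + 2 ^ d, by positivity, fun u₀ hu T N hT hN ↦ ?_⟩
  obtain ⟨R, hR, hR_norm, hR_sum⟩ := exists_hasSumL2_heatSol_mul_fN_one
    (memLp_comp_smul (inv_ne_zero hN.ne') hu) (T := T * N ^ 2) (by positivity)
  refine ⟨fun x ↦ R (N • x), memLp_comp_smul hN.ne' hR, ?_, ?_⟩
  · simpa only [inv_smul_smul₀ hN.ne'] using l2norm_comp_smul_le hN.ne' hR_norm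
  · simpa only [intPoint_eq_smul_latticePt hN.ne', heatSol_comp_inv_smul hN hT.le, fN_one_smul]
      using hR_sum.comp_smul hN.ne'
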